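/- Assume a_{ij}(ω) ≥ 0 for all i ≠ j and all ω ∈ Ω. Then for every ω ∈ Ω there exists a nontrivial entire positive solution of the random linear system u' = A(θ_t ω)u, i.e. a continuous function v : ℝ → X⁺ ∖ {0} such that v(t) = v(s) + ∫_s^t A(θ_τ ω) v(τ) dτ for all s ≤ t in ℝ. -/

import Mathlib

open MeasureTheory Matrix Filter

/-- The Euclidean norm on `Fin N → ℝ`. -/
noncomputable def enorm' {N : ℕ} (u : Fin N → ℝ) : ℝ := Real.sqrt (∑ i, (u i) ^ 2)

/-- The operator norm of a matrix with respect to the Euclidean norm. -/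
noncomputable def eopNorm {N : ℕ} (M : Matrix (Fin N) (Fin N) ℝ) : ℝ :=
  sSup {c : ℝ | ∃ u : Fin N → ℝ, enorm' u ≤ 1 ∧ c = enorm' (M.mulVec u)}

/-!
If the off-diagonal entries of `L(t)` are nonnegative and `m(t)` is the sum of the absolute values
of its diagonal entries, then `L + m` maps the positive cone into itself. Picard iteration for
`u' = (L + m) u`, a contraction on all of `ℝ` at once in a norm weighted by a hyperbolic cosine of
`∫ ‖L + m‖`, therefore preserves the functions which stay in the cone forward in time, and
multiplying its fixed point by `exp (-∫ m)` gives a solution of `u' = L u` with the same property.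

Start such solutions in the cone at time `-n` and normalise them at time `0`. A subsequence of the
values at time `0` converges by compactness of the unit sphere, and by continuous dependence on the
initial value the solution through the limit lies in the cone at all times. It never vanishes,
because a solution which vanishes once is identically zero.
-/

open Set Topology BoundedContinuousFunction

section Calculus

variable {E : Type*} [NormedAddCommGroup E] {a b : ℝ}

theorem locallyIntegrable_iff_intervalIntegrable {f : ℝ → E} :
    LocallyIntegrable f ↔ ∀ a b, IntervalIntegrable f volume a b := by
  refine ⟨fun hf a b => ?_, fun hf x => ?_⟩
  · exact intervalIntegrable_iff.2
      ((hf.integrableOn_isCompact isCompact_uIcc).mono_set uIoc_subset_uIcc)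
  · refine ⟨Ioc (x - 1) (x + 1), Ioc_mem_nhds (by linarith) (by linarith), ?_⟩
    exact (intervalIntegrable_iff_integrableOn_Ioc_of_le (by linarith)).1 (hf _ _)

theorem absolutelyContinuousOnInterval_of_dist_le_mul {X Y : Type*} [PseudoMetricSpace X]
    [PseudoMetricSpace Y] {f : ℝ → X} {g : ℝ → Y} {K : ℝ}
    (hf : AbsolutelyContinuousOnInterval f a b)
    (hgf : ∀ x ∈ uIcc a b, ∀ y ∈ uIcc a b, dist (g x) (g y) ≤ K * dist (f x) (f y)) :
    AbsolutelyContinuousOnInterval g a b := by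
  refine squeeze_zero' (Eventually.of_forall fun I => Finset.sum_nonneg fun i _ => dist_nonneg) ?_
    (by simpa using Tendsto.const_mul K hf)
  rw [eventually_inf_principal]
  refine Eventually.of_forall fun I hI => ?_
  rw [Finset.mul_sum]
  exact Finset.sum_le_sum fun i hi => hgf _ (hI.1 i hi).1 _ (hI.1 i hi).2

variable [NormedSpace ℝ E]

theorem locallyIntegrable_smul_const {X : Type*} [MeasurableSpace X] [TopologicalSpace X]
    {μ : Measure X} {f : X → ℝ} (hf : LocallyIntegrable f μ) (c : E) :
    LocallyIntegrable (fun x => f x • c) μ := fun x =>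
  let ⟨U, hU, hfU⟩ := hf x
  ⟨U, hU, Integrable.smul_const hfU c⟩

theorem absolutelyContinuousOnInterval_comp_contDiff {F : Type*} [NormedAddCommGroup F]
    [NormedSpace ℝ F] {g : E → F} [ProperSpace E] {f : ℝ → E} (hg : ContDiff ℝ 1 g)
    (hf : AbsolutelyContinuousOnInterval f a b) :
    AbsolutelyContinuousOnInterval (fun x => g (f x)) a b := by
  obtain ⟨C, hC⟩ := hf.exists_bound
  obtain ⟨K, hK⟩ := hg.contDiffOn.exists_lipschitzOnWith (by decide)
    (convex_closedBall (0 : E) C) (isCompact_closedBall 0 C)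
  exact absolutelyContinuousOnInterval_of_dist_le_mul hf fun x hx y hy =>
    hK.dist_le_mul _ (by simpa using hC x hx) _ (by simpa using hC y hy)

theorem absolutelyContinuousOnInterval_primitive {f : ℝ → E} {c : ℝ}
    (hf : IntervalIntegrable f volume a b) (hc : c ∈ uIcc a b) :
    AbsolutelyContinuousOnInterval (fun x => ∫ y in c..x, f y) a b := by
  have hf' : ∀ x ∈ uIcc a b, ∀ y ∈ uIcc a b, IntervalIntegrable f volume x y :=
    fun x hx y hy => hf.mono_set (uIcc_subset_uIcc hx hy)
  refine absolutelyContinuousOnInterval_of_dist_le_mul (K := 1)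
    (hf.norm.absolutelyContinuousOnInterval_intervalIntegral hc) fun x hx y hy => ?_
  rw [dist_eq_norm, dist_eq_norm,
    intervalIntegral.integral_interval_sub_left (hf' c hc x hx) (hf' c hc y hy),
    intervalIntegral.integral_interval_sub_left (hf' c hc x hx).norm (hf' c hc y hy).norm, one_mul]
  exact intervalIntegral.norm_integral_le_abs_integral_norm

theorem integral_eq_sub_of_ae_hasDerivAt [CompleteSpace E] {f f' : ℝ → E}
    (hf : AbsolutelyContinuousOnInterval f a b) (hf' : IntervalIntegrable f' volume a b)
    (hderiv : ∀ᵐ x, x ∈ uIcc a b → HasDerivAt f (f' x) x) :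
    ∫ x in a..b, f' x = f b - f a := by
  have hac := hf.sub (absolutelyContinuousOnInterval_primitive hf' left_mem_uIcc)
  obtain ⟨C, hC⟩ := hac.const_of_ae_hasDerivAt_zero <| by
    filter_upwards [hderiv, hf'.ae_hasDerivAt_integral] with x hfx hintx hx
    simpa using (hfx hx).sub (hintx hx a left_mem_uIcc)
  have hab := (hC a left_mem_uIcc).trans (hC b right_mem_uIcc).symm
  simp only [Pi.sub_apply, intervalIntegral.integral_same, sub_zero] at hab
  rw [hab, sub_sub_cancel]

end Calculus

theorem integral_mul_cosh_primitive {m : ℝ → ℝ} {s t : ℝ} (hm : IntervalIntegrable m volume s t)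
    (c : ℝ) :
    ∫ x in s..t, c * m x * Real.cosh (c * ∫ y in s..x, m y)
      = Real.sinh (c * ∫ y in s..t, m y) := by
  have hac := (absolutelyContinuousOnInterval_primitive hm left_mem_uIcc).const_mul c
  have hint : IntervalIntegrable (fun x => c * m x * Real.cosh (c * ∫ y in s..x, m y)) volume s t :=
    (hm.const_mul c).mul_continuousOn (Real.continuous_cosh.comp_continuousOn hac.continuousOn)
  rw [integral_eq_sub_of_ae_hasDerivAt
    (absolutelyContinuousOnInterval_comp_contDiff Real.contDiff_sinh hac) hint]
  · simp
  · filter_upwards [hm.ae_hasDerivAt_integral] with x hx hxst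
    simpa only [mul_comm] using ((hx hxst s left_mem_uIcc).const_mul c).sinh

section LinearEquation

variable {E : Type*} [NormedAddCommGroup E] [NormedSpace ℝ E] {L : ℝ → E →L[ℝ] E}
  {v w : ℝ → E} {s t : ℝ}

/-- The weight `cosh (2 ∫ₛᵗ ‖L‖)`, with respect to which solutions of `u' = L u` are estimated.
Up to a factor 2 it is `exp (2 |∫ₛᵗ ‖L‖|)`, but it is smooth as a function of the integral. -/
noncomputable def growthWeight (L : ℝ → E →L[ℝ] E) (s t : ℝ) : ℝ :=
  Real.cosh (2 * ∫ τ in s..t, ‖L τ‖)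

theorem one_le_growthWeight : 1 ≤ growthWeight L s t := Real.one_le_cosh _

theorem growthWeight_pos : 0 < growthWeight L s t := Real.cosh_pos _

@[simp]
theorem growthWeight_self : growthWeight L s s = 1 := by simp [growthWeight]

theorem continuous_growthWeight (hL : LocallyIntegrable L) (s : ℝ) :
    Continuous (growthWeight L s) :=
  Real.continuous_cosh.comp <| continuous_const.mul <| intervalIntegral.continuous_primitive
    (fun a b => (locallyIntegrable_iff_intervalIntegrable.1 hL a b).norm) s

theorem intervalIntegrable_apply (hL : LocallyIntegrable L) (hv : Continuous v) (a b : ℝ) :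
    IntervalIntegrable (fun τ => L τ (v τ)) volume a b := by
  obtain ⟨C, hC⟩ := isCompact_uIcc.exists_bound_of_continuousOn (hv.continuousOn (s := uIcc a b))
  rw [intervalIntegrable_iff]
  refine (ContinuousLinearMap.id ℝ (E →L[ℝ] E)).integrable_of_bilin_of_bdd_right C
    (intervalIntegrable_iff.1 (locallyIntegrable_iff_intervalIntegrable.1 hL a b))
    hv.aestronglyMeasurable ?_
  exact ae_restrict_of_forall_mem measurableSet_uIoc fun τ hτ => hC τ (uIoc_subset_uIcc hτ)

/-- The factor `1/2` is what makes the Picard operator a contraction on all of `ℝ`. -/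
theorem norm_integral_apply_le (hL : LocallyIntegrable L) {K : ℝ}
    (hv : ∀ τ ∈ uIcc s t, ‖v τ‖ ≤ K * growthWeight L s τ) :
    ‖∫ τ in s..t, L τ (v τ)‖ ≤ K / 2 * growthWeight L s t := by
  have hLI := (locallyIntegrable_iff_intervalIntegrable.1 hL s t).norm
  have hK : 0 ≤ K := by simpa using (norm_nonneg _).trans (hv s left_mem_uIcc)
  have hWI : IntervalIntegrable (fun τ => 2 * ‖L τ‖ * growthWeight L s τ) volume s t :=
    (hLI.const_mul 2).mul_continuousOn (continuous_growthWeight hL s).continuousOn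
  have hbound : ∀ τ ∈ uIoc s t, ‖L τ (v τ)‖ ≤ K / 2 * (2 * ‖L τ‖ * growthWeight L s τ) :=
    fun τ hτ => calc
      ‖L τ (v τ)‖ ≤ ‖L τ‖ * (K * growthWeight L s τ) :=
        (L τ).le_of_opNorm_le_of_le le_rfl (hv τ (uIoc_subset_uIcc hτ))
      _ = K / 2 * (2 * ‖L τ‖ * growthWeight L s τ) := by ring
  calc ‖∫ τ in s..t, L τ (v τ)‖
      ≤ |∫ τ in s..t, K / 2 * (2 * ‖L τ‖ * growthWeight L s τ)| :=
        intervalIntegral.norm_integral_le_abs_of_norm_le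
          (ae_restrict_of_forall_mem measurableSet_uIoc hbound) (hWI.const_mul _)
    _ = K / 2 * |Real.sinh (2 * ∫ τ in s..t, ‖L τ‖)| := by
        rw [intervalIntegral.integral_const_mul, abs_mul, abs_of_nonneg (by positivity)]
        exact congrArg (K / 2 * |·|) (integral_mul_cosh_primitive hLI 2)
    _ ≤ K / 2 * growthWeight L s t := by
        gcongr
        rw [Real.abs_sinh, growthWeight, ← Real.cosh_abs]
        exact (Real.sinh_lt_cosh _).le

/-- Carathéodory solutions on all of `ℝ` of the linear equation `u' = L(t) u`, in integral form.
The integral is oriented, so the equation is required for `t < s` as well. -/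
structure IsEntireSolution (L : ℝ → E →L[ℝ] E) (v : ℝ → E) : Prop where
  continuous : Continuous v
  eq_add_integral : ∀ s t, v t = v s + ∫ τ in s..t, L τ (v τ)

namespace IsEntireSolution

theorem of_eq_add_integral (hL : LocallyIntegrable L) (hv : Continuous v) (r : ℝ)
    (hr : ∀ t, v t = v r + ∫ τ in r..t, L τ (v τ)) : IsEntireSolution L v := by
  have hI := intervalIntegrable_apply hL hv
  refine ⟨hv, fun s t => ?_⟩
  rw [hr t, hr s, add_assoc, intervalIntegral.integral_add_adjacent_intervals (hI r s) (hI s t)]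

theorem sub (hL : LocallyIntegrable L) (hv : IsEntireSolution L v) (hw : IsEntireSolution L w) :
    IsEntireSolution L (v - w) := by
  refine ⟨hv.continuous.sub hw.continuous, fun s t => ?_⟩
  simp only [Pi.sub_apply, map_sub]
  rw [intervalIntegral.integral_sub (intervalIntegrable_apply hL hv.continuous s t)
    (intervalIntegrable_apply hL hw.continuous s t), hv.eq_add_integral s t,
    hw.eq_add_integral s t]
  abel

theorem const_smul (hv : IsEntireSolution L v) (c : ℝ) : IsEntireSolution L (c • v) := by
  refine ⟨hv.continuous.const_smul c, fun s t => ?_⟩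
  simp only [Pi.smul_apply, map_smul, intervalIntegral.integral_smul]
  rw [hv.eq_add_integral s t, smul_add]

theorem norm_le (hL : LocallyIntegrable L) (hv : IsEntireSolution L v) (s t : ℝ) :
    ‖v t‖ ≤ 2 * ‖v s‖ * growthWeight L s t := by
  have hcont : ContinuousOn (fun τ => ‖v τ‖ / growthWeight L s τ) (uIcc s t) :=
    (hv.continuous.norm.div (continuous_growthWeight hL s)
      fun τ => growthWeight_pos.ne').continuousOn
  obtain ⟨p, hp, hmax⟩ := isCompact_uIcc.exists_isMaxOn nonempty_uIcc hcont
  set K := ‖v p‖ / growthWeight L s p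
  have hvK : ∀ τ ∈ uIcc s t, ‖v τ‖ ≤ K * growthWeight L s τ := fun τ hτ =>
    (div_le_iff₀ growthWeight_pos).1 (hmax hτ)
  have hKs : K ≤ 2 * ‖v s‖ := by
    have hvp : K * growthWeight L s p ≤ ‖v s‖ + K / 2 * growthWeight L s p := calc
      K * growthWeight L s p = ‖v p‖ := div_mul_cancel₀ _ growthWeight_pos.ne'
      _ = ‖v s + ∫ τ in s..p, L τ (v τ)‖ := by rw [← hv.eq_add_integral s p]
      _ ≤ ‖v s‖ + ‖∫ τ in s..p, L τ (v τ)‖ := norm_add_le _ _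
      _ ≤ ‖v s‖ + K / 2 * growthWeight L s p := by
        gcongr
        exact norm_integral_apply_le hL fun τ hτ => hvK τ (uIcc_subset_uIcc_left hp hτ)
    have hK0 : 0 ≤ K := div_nonneg (norm_nonneg _) growthWeight_pos.le
    nlinarith [one_le_growthWeight (L := L) (s := s) (t := p)]
  exact (hvK t right_mem_uIcc).trans (by gcongr; exact growthWeight_pos.le)

theorem ne_zero (hL : LocallyIntegrable L) (hv : IsEntireSolution L v) (hs : v s ≠ 0) (t : ℝ) :
    v t ≠ 0 := by
  intro ht
  have hvs := hv.norm_le hL t s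
  rw [ht, norm_zero, mul_zero, zero_mul] at hvs
  exact hs (norm_le_zero_iff.1 hvs)

theorem tendsto (hL : LocallyIntegrable L) {ι : Type*} {l : Filter ι} {u : ι → ℝ → E}
    (hu : ∀ i, IsEntireSolution L (u i)) (hv : IsEntireSolution L v)
    (hs : Tendsto (fun i => u i s) l (𝓝 (v s))) (t : ℝ) :
    Tendsto (fun i => u i t) l (𝓝 (v t)) := by
  rw [tendsto_iff_norm_sub_tendsto_zero] at hs ⊢
  refine squeeze_zero (fun i => norm_nonneg _) (fun i => ((hu i).sub hL hv).norm_le hL s t) ?_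
  simpa using (hs.const_mul 2).mul_const (growthWeight L s t)

end IsEntireSolution

theorem continuous_growthWeight_smul (hL : LocallyIntegrable L) (s : ℝ) (w : ℝ →ᵇ E) :
    Continuous fun τ => growthWeight L s τ • w τ :=
  (continuous_growthWeight hL s).smul w.continuous

theorem norm_integral_growthWeight_smul_le (hL : LocallyIntegrable L) (s t : ℝ) (w : ℝ →ᵇ E) :
    ‖∫ τ in s..t, L τ (growthWeight L s τ • w τ)‖ ≤ ‖w‖ / 2 * growthWeight L s t := by
  refine norm_integral_apply_le hL fun τ _ => ?_
  rw [norm_smul, Real.norm_of_nonneg growthWeight_pos.le, mul_comm]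
  gcongr
  · exact growthWeight_pos.le
  · exact w.norm_coe_le_norm τ

theorem norm_inv_growthWeight_smul_le_iff {x : E} {C : ℝ} :
    ‖(growthWeight L s t)⁻¹ • x‖ ≤ C ↔ ‖x‖ ≤ C * growthWeight L s t := by
  rw [norm_smul, norm_inv, Real.norm_of_nonneg growthWeight_pos.le,
    inv_mul_le_iff₀' growthWeight_pos]

/-- The Picard operator of `u' = L u`, `u s = x`, written for the bounded function
`w = u / growthWeight L s`. -/
noncomputable def weightedPicard (hL : LocallyIntegrable L) (s : ℝ) (x : E) (w : ℝ →ᵇ E) :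
    ℝ →ᵇ E :=
  .ofNormedAddCommGroup
    (fun t => (growthWeight L s t)⁻¹ • (x + ∫ τ in s..t, L τ (growthWeight L s τ • w τ)))
    (((continuous_growthWeight hL s).inv₀ fun _ => growthWeight_pos.ne').smul <|
      continuous_const.add <| intervalIntegral.continuous_primitive
        (intervalIntegrable_apply hL (continuous_growthWeight_smul hL s w)) s)
    (‖x‖ + ‖w‖ / 2) fun t => norm_inv_growthWeight_smul_le_iff.2 <| calc
      ‖x + ∫ τ in s..t, L τ (growthWeight L s τ • w τ)‖
        ≤ ‖x‖ + ‖w‖ / 2 * growthWeight L s t :=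
          norm_add_le_of_le le_rfl (norm_integral_growthWeight_smul_le hL s t w)
      _ ≤ ‖x‖ * growthWeight L s t + ‖w‖ / 2 * growthWeight L s t := by
          gcongr; exact le_mul_of_one_le_right (norm_nonneg x) one_le_growthWeight
      _ = (‖x‖ + ‖w‖ / 2) * growthWeight L s t := by ring

theorem contractingWith_weightedPicard (hL : LocallyIntegrable L) (s : ℝ) (x : E) :
    ContractingWith (1 / 2) (weightedPicard hL s x) := by
  refine ⟨by norm_num, LipschitzWith.of_dist_le_mul fun w₁ w₂ => ?_⟩
  refine (BoundedContinuousFunction.dist_le (by positivity)).2 fun t => ?_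
  have hI (w : ℝ →ᵇ E) := intervalIntegrable_apply hL (continuous_growthWeight_smul hL s w) s t
  have hdiff : weightedPicard hL s x w₁ t - weightedPicard hL s x w₂ t
      = (growthWeight L s t)⁻¹ • ∫ τ in s..t, L τ (growthWeight L s τ • (w₁ - w₂) τ) := by
    simp only [weightedPicard, coe_ofNormedAddCommGroup,
      BoundedContinuousFunction.sub_apply, smul_sub (growthWeight L s _) (w₁ _), map_sub]
    rw [intervalIntegral.integral_sub (hI w₁) (hI w₂), ← smul_sub, add_sub_add_left_eq_sub]
  rw [dist_eq_norm, hdiff, dist_eq_norm, norm_inv_growthWeight_smul_le_iff]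
  refine (norm_integral_growthWeight_smul_le hL s t (w₁ - w₂)).trans_eq ?_
  push_cast
  ring

theorem isEntireSolution_of_isFixedPt_weightedPicard (hL : LocallyIntegrable L) {s : ℝ} {x : E}
    {w : ℝ →ᵇ E} (hw : Function.IsFixedPt (weightedPicard hL s x) w) :
    IsEntireSolution L (fun t => growthWeight L s t • w t) ∧ growthWeight L s s • w s = x := by
  have hv (t : ℝ) : growthWeight L s t • w t
      = x + ∫ τ in s..t, L τ (growthWeight L s τ • w τ) := by
    conv_lhs => rw [← hw.eq]
    exact smul_inv_smul₀ growthWeight_pos.ne' _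
  have hs : growthWeight L s s • w s = x := by rw [hv, intervalIntegral.integral_same, add_zero]
  refine ⟨.of_eq_add_integral hL (continuous_growthWeight_smul hL s w) s ?_, hs⟩
  simpa only [hs] using hv

section Cone

variable [CompleteSpace E] {K : ProperCone ℝ E}

theorem integral_mem_properCone {X : Type*} [MeasurableSpace X] {μ : Measure X}
    [IsFiniteMeasure μ] {f : X → E} (hf : ∀ᵐ x ∂μ, f x ∈ K) : ∫ x, f x ∂μ ∈ K := by
  rcases eq_zero_or_neZero μ with rfl | _
  · simp
  by_cases hfi : Integrable f μ
  · rw [← measure_smul_average]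
    exact K.smul_mem (K.convex.average_mem K.isClosed hf hfi) measureReal_nonneg
  · rw [integral_undef hfi]
    exact zero_mem K

theorem exists_isEntireSolution_of_mapsTo (hL : LocallyIntegrable L)
    (hLK : ∀ t, MapsTo (L t) K K) (s : ℝ) {x : E} (hx : x ∈ K) :
    ∃ v, IsEntireSolution L v ∧ v s = x ∧ ∀ t, s ≤ t → v t ∈ K := by
  let S : Set (ℝ →ᵇ E) := {w | ∀ t, s ≤ t → w t ∈ K}
  have hS : IsClosed S := by
    simp only [S, Set.ofPred_forall]
    exact isClosed_iInter fun t => isClosed_iInter fun _ =>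
      K.isClosed.preimage (BoundedContinuousFunction.lipschitz_eval_const t).continuous
  have hmaps : MapsTo (weightedPicard hL s x) S S := fun w hw t hst => by
    refine K.smul_mem (add_mem hx ?_) (inv_nonneg.2 growthWeight_pos.le)
    rw [intervalIntegral.integral_of_le hst]
    exact integral_mem_properCone <| ae_restrict_of_forall_mem measurableSet_Ioc fun τ hτ =>
      hLK τ (K.smul_mem (hw τ hτ.1.le) growthWeight_pos.le)
  have hcontr := (contractingWith_weightedPicard hL s x).restrict hmaps
  obtain ⟨w, hwS, hw, -⟩ := hcontr.exists_fixedPoint' hS.isComplete hmaps (x := 0)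
    (fun _ _ => zero_mem K) (edist_ne_top _ _)
  obtain ⟨hsol, hs⟩ := isEntireSolution_of_isFixedPt_weightedPicard hL hw
  exact ⟨_, hsol, hs, fun t hst => K.smul_mem (hwS t hst) growthWeight_pos.le⟩

theorem exists_isEntireSolution (hL : LocallyIntegrable L) (s : ℝ) (x : E) :
    ∃ v, IsEntireSolution L v ∧ v s = x := by
  obtain ⟨v, hv, hs, -⟩ := exists_isEntireSolution_of_mapsTo (K := ⊤) hL
    (fun _ _ _ => Submodule.mem_top) s (x := x) Submodule.mem_top
  exact ⟨v, hv, hs⟩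

end Cone

section Shift

theorem locallyIntegrable_add_smul_id {m : ℝ → ℝ} (hL : LocallyIntegrable L)
    (hm : LocallyIntegrable m) :
    LocallyIntegrable fun t => L t + m t • ContinuousLinearMap.id ℝ E :=
  LocallyIntegrable.add (ε'' := E →L[ℝ] E) hL (locallyIntegrable_smul_const hm _)

namespace IsEntireSolution

theorem absolutelyContinuousOnInterval (hL : LocallyIntegrable L) (hv : IsEntireSolution L v)
    (a b : ℝ) : AbsolutelyContinuousOnInterval v a b := by
  refine absolutelyContinuousOnInterval_of_dist_le_mul (K := 1)
    (absolutelyContinuousOnInterval_primitive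
      (intervalIntegrable_apply hL hv.continuous a b) left_mem_uIcc) fun x _ y _ => ?_
  rw [hv.eq_add_integral a x, hv.eq_add_integral a y, dist_add_left, one_mul]

variable [CompleteSpace E]

theorem ae_hasDerivAt (hL : LocallyIntegrable L) (hv : IsEntireSolution L v) :
    ∀ᵐ t, HasDerivAt v (L t (v t)) t := by
  have hLv := locallyIntegrable_iff_intervalIntegrable.2 (intervalIntegrable_apply hL hv.continuous)
  filter_upwards [LocallyIntegrable.ae_hasDerivAt_integral hLv] with t ht
  exact ((ht 0).const_add (v 0)).congr_of_eventuallyEq (.of_forall (hv.eq_add_integral 0))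

theorem exp_neg_primitive_smul {m : ℝ → ℝ} (hL : LocallyIntegrable L) (hm : LocallyIntegrable m)
    (hv : IsEntireSolution (fun t => L t + m t • ContinuousLinearMap.id ℝ E) v) (r : ℝ) :
    IsEntireSolution L fun t => Real.exp (-∫ τ in r..t, m τ) • v t := by
  have hmI := locallyIntegrable_iff_intervalIntegrable.1 hm
  have hLm := locallyIntegrable_add_smul_id hL hm
  have hcont : Continuous fun t => Real.exp (-∫ τ in r..t, m τ) • v t :=
    (intervalIntegral.continuous_primitive hmI r).neg.rexp.smul hv.continuous
  have hderiv : ∀ᵐ t, HasDerivAt (fun t => Real.exp (-∫ τ in r..t, m τ) • v t)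
      (L t (Real.exp (-∫ τ in r..t, m τ) • v t)) t := by
    filter_upwards [hv.ae_hasDerivAt hLm,
      LocallyIntegrable.ae_hasDerivAt_integral hm] with t hvt hmt
    refine ((hmt r).neg.exp.smul hvt).congr_deriv ?_
    simp only [map_smul, _root_.add_apply, _root_.smul_apply, ContinuousLinearMap.id_apply,
      Pi.neg_apply]
    module
  refine .of_eq_add_integral hL hcont r fun t => ?_
  have hac := (absolutelyContinuousOnInterval_comp_contDiff (Real.contDiff_exp.comp contDiff_neg)
    (absolutelyContinuousOnInterval_primitive (hmI r t) left_mem_uIcc)).smul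
    (hv.absolutelyContinuousOnInterval hLm r t)
  rw [integral_eq_sub_of_ae_hasDerivAt hac (intervalIntegrable_apply hL hcont r t)
    (hderiv.mono fun t ht _ => ht)]
  simp

end IsEntireSolution

variable [CompleteSpace E] {K : ProperCone ℝ E} {m : ℝ → ℝ}

theorem exists_isEntireSolution_of_add_smul_mem (hL : LocallyIntegrable L)
    (hm : LocallyIntegrable m) (hLK : ∀ t, ∀ x ∈ K, L t x + m t • x ∈ K) (s : ℝ) {x : E}
    (hx : x ∈ K) :
    ∃ v, IsEntireSolution L v ∧ v s = x ∧ ∀ t, s ≤ t → v t ∈ K := by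
  obtain ⟨u, hu, hus, huK⟩ :=
    exists_isEntireSolution_of_mapsTo (locallyIntegrable_add_smul_id hL hm) hLK s hx
  refine ⟨_, hu.exp_neg_primitive_smul hL hm s, by simp [hus], fun t hst => ?_⟩
  exact K.smul_mem (huK t hst) (Real.exp_pos _).le

theorem exists_isEntireSolution_norm_eq_one (hL : LocallyIntegrable L)
    (hm : LocallyIntegrable m) (hLK : ∀ t, ∀ x ∈ K, L t x + m t • x ∈ K) {e : E} (he : e ∈ K)
    (he0 : e ≠ 0) (s r : ℝ) :
    ∃ v, IsEntireSolution L v ∧ ‖v r‖ = 1 ∧ ∀ t, s ≤ t → v t ∈ K := by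
  obtain ⟨u, hu, hus, huK⟩ := exists_isEntireSolution_of_add_smul_mem hL hm hLK s he
  have hur : u r ≠ 0 := hu.ne_zero hL (hus ▸ he0) r
  exact ⟨‖u r‖⁻¹ • u, hu.const_smul _, norm_smul_inv_norm hur,
    fun t hst => K.smul_mem (huK t hst) (by positivity)⟩

end Shift

theorem exists_isEntireSolution_mem_ne_zero [FiniteDimensional ℝ E] {K : ProperCone ℝ E}
    {m : ℝ → ℝ} (hL : LocallyIntegrable L) (hm : LocallyIntegrable m)
    (hLK : ∀ t, ∀ x ∈ K, L t x + m t • x ∈ K) {e : E} (he : e ∈ K) (he0 : e ≠ 0) :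
    ∃ v, IsEntireSolution L v ∧ ∀ t, v t ∈ K ∧ v t ≠ 0 := by
  have := FiniteDimensional.complete ℝ E
  have := FiniteDimensional.proper_real E
  choose u hu hu_norm huK using fun n : ℕ =>
    exists_isEntireSolution_norm_eq_one hL hm hLK he he0 (-n : ℝ) 0
  obtain ⟨y, hy, φ, hφ, hφy⟩ := (isCompact_sphere (0 : E) 1).tendsto_subseq
    (x := fun n => u n 0) fun n => mem_sphere_zero_iff_norm.2 (hu_norm n)
  obtain ⟨v, hv, hv0⟩ := exists_isEntireSolution hL 0 y
  refine ⟨v, hv, fun t => ⟨?_, hv.ne_zero hL (s := 0) ?_ t⟩⟩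
  · refine K.isClosed.mem_of_tendsto
      (hv.tendsto hL (fun k => hu (φ k)) (s := 0) (hv0 ▸ hφy) t) ?_
    obtain ⟨n, hn⟩ := exists_nat_ge (-t)
    filter_upwards [hφ.tendsto_atTop.eventually_ge_atTop n] with k hk
    have hnk : (n : ℝ) ≤ φ k := by exact_mod_cast hk
    exact huK (φ k) t (by linarith)
  · rw [hv0]
    exact ne_zero_of_mem_unit_sphere ⟨y, hy⟩

end LinearEquation

section Cooperative

variable {ι : Type*} [Fintype ι]

theorem locallyIntegrable_toContinuousLinearMap_mulVecLin {B : ℝ → Matrix ι ι ℝ}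
    (hB : ∀ i j, LocallyIntegrable fun t => B t i j) :
    LocallyIntegrable fun t => (B t).mulVecLin.toContinuousLinearMap := by
  classical
  have hsum (t : ℝ) : (B t).mulVecLin.toContinuousLinearMap
      = ∑ j, ∑ i, B t i j • (ContinuousLinearMap.proj j).smulRight (Pi.single i (1 : ℝ)) := by
    ext x k
    simp [mulVec, dotProduct, Pi.single_apply]
  simp only [hsum]
  refine locallyIntegrable_finsetSum (ε''' := (ι → ℝ) →L[ℝ] (ι → ℝ)) _ fun j _ => ?_
  refine locallyIntegrable_finsetSum (ε''' := (ι → ℝ) →L[ℝ] (ι → ℝ)) _ fun i _ => ?_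
  exact locallyIntegrable_smul_const (hB i j) _

theorem mulVec_add_sum_abs_diag_smul_nonneg {M : Matrix ι ι ℝ}
    (hM : ∀ i j, i ≠ j → 0 ≤ M i j) {x : ι → ℝ} (hx : 0 ≤ x) :
    0 ≤ M *ᵥ x + (∑ k, |M k k|) • x := by
  classical
  intro i
  have hoff : 0 ≤ ∑ j ∈ Finset.univ.erase i, M i j * x j := Finset.sum_nonneg fun j hj =>
    mul_nonneg (hM i j (Finset.ne_of_mem_erase hj).symm) (hx j)
  have hdiag : 0 ≤ M i i + ∑ k, |M k k| := by
    have hle := Finset.single_le_sum (f := fun k => |M k k|) (fun k _ => abs_nonneg _)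
      (Finset.mem_univ i)
    linarith [neg_abs_le (M i i)]
  calc 0 ≤ (M i i + ∑ k, |M k k|) * x i + ∑ j ∈ Finset.univ.erase i, M i j * x j :=
        add_nonneg (mul_nonneg hdiag (hx i)) hoff
    _ = (M *ᵥ x + (∑ k, |M k k|) • x) i := by
        rw [Pi.add_apply, mulVec, dotProduct, Pi.smul_apply, smul_eq_mul,
          ← Finset.add_sum_erase _ (fun j => M i j * x j) (Finset.mem_univ i)]
        ring

theorem stmt_15_general [Nonempty ι] {B : ℝ → Matrix ι ι ℝ}
    (hB : ∀ i j, LocallyIntegrable fun t => B t i j) (hB0 : ∀ t i j, i ≠ j → 0 ≤ B t i j) :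
    ∃ v : ℝ → ι → ℝ, Continuous v ∧ (∀ t, (∀ i, 0 ≤ v t i) ∧ v t ≠ 0) ∧
      ∀ s t, v t = v s + ∫ τ in s..t, B τ *ᵥ v τ := by
  have hm : LocallyIntegrable fun t => ∑ k, |B t k k| :=
    locallyIntegrable_finsetSum _ fun k _ => (hB k k).mono
      (hB k k).aestronglyMeasurable.norm (.of_forall fun t => by simp)
  obtain ⟨v, hv, hvK⟩ := exists_isEntireSolution_mem_ne_zero
    (K := ProperCone.positive ℝ (ι → ℝ)) (locallyIntegrable_toContinuousLinearMap_mulVecLin hB) hm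
    (fun t x hx => mulVec_add_sum_abs_diag_smul_nonneg (hB0 t) hx)
    (ProperCone.mem_positive.2 zero_le_one) one_ne_zero
  exact ⟨v, hv.continuous, hvK, hv.eq_add_integral⟩

end Cooperative

section OperatorNorm

variable {N : ℕ}

theorem enorm'_eq_norm (u : Fin N → ℝ) : enorm' u = ‖WithLp.toLp 2 u‖ := by
  simp [enorm', EuclideanSpace.norm_eq]

theorem abs_le_enorm' (u : Fin N → ℝ) (i : Fin N) : |u i| ≤ enorm' u := by
  rw [enorm'_eq_norm]
  exact PiLp.norm_apply_le (WithLp.toLp 2 u) i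

theorem bddAbove_enorm'_mulVec (M : Matrix (Fin N) (Fin N) ℝ) :
    BddAbove {c : ℝ | ∃ u : Fin N → ℝ, enorm' u ≤ 1 ∧ c = enorm' (M *ᵥ u)} := by
  refine ⟨‖Matrix.toEuclideanCLM (𝕜 := ℝ) M‖, ?_⟩
  rintro _ ⟨u, hu, rfl⟩
  rw [enorm'_eq_norm] at hu ⊢
  exact (Matrix.toEuclideanCLM (𝕜 := ℝ) M).unit_le_opNorm _ hu

theorem abs_coeff_le_eopNorm (M : Matrix (Fin N) (Fin N) ℝ) (i j : Fin N) :
    |M i j| ≤ eopNorm M := by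
  have hunit : enorm' (Pi.single j 1) ≤ 1 := by simp [enorm'_eq_norm]
  calc |M i j| = |(M *ᵥ Pi.single j 1) i| := by simp
    _ ≤ enorm' (M *ᵥ Pi.single j 1) := abs_le_enorm' _ i
    _ ≤ eopNorm M := le_csSup (bddAbove_enorm'_mulVec M) ⟨_, hunit, rfl⟩

theorem locallyIntegrable_coeff_of_eopNorm {B : ℝ → Matrix (Fin N) (Fin N) ℝ} {i j : Fin N}
    (hBmeas : Measurable fun t => B t i j)
    (hB : ∀ a c, IntervalIntegrable (fun t => eopNorm (B t)) volume a c) :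
    LocallyIntegrable fun t => B t i j :=
  (locallyIntegrable_iff_intervalIntegrable.2 hB).mono hBmeas.aestronglyMeasurable <|
    .of_forall fun t => (abs_coeff_le_eopNorm (B t) i j).trans (le_abs_self _)

end OperatorNorm

/-- Existence of a nontrivial entire positive solution of a random
cooperative linear system of ODEs. -/
theorem stmt_15 {N : ℕ} (hN : 2 ≤ N)
    {Ω : Type*} [MeasurableSpace Ω] (ℙ : Measure Ω) [IsProbabilityMeasure ℙ]
    [ℙ.IsComplete]
    (θ : ℝ → Ω → Ω) (hθ0 : θ 0 = id)
    (hθadd : ∀ s t : ℝ, θ (s + t) = θ s ∘ θ t)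
    (hθjm : Measurable fun p : ℝ × Ω => θ p.1 p.2)
    (hθmp : ∀ t, MeasurePreserving (θ t) ℙ ℙ)
    (hθerg : ∀ F : Set Ω, MeasurableSet F → (∀ t, θ t ⁻¹' F = F) →
      ℙ F = 0 ∨ ℙ F = 1)
    (A : Ω → Matrix (Fin N) (Fin N) ℝ)
    (hAmeas : ∀ i j, Measurable fun ω => A ω i j)
    (hAloc : ∀ ω, ∀ a c : ℝ,
      IntervalIntegrable (fun t => eopNorm (A (θ t ω))) volume a c)
    (hO1 : ∀ ω (i j : Fin N), i ≠ j → 0 ≤ A ω i j) :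
    ∀ ω : Ω, ∃ v : ℝ → Fin N → ℝ, Continuous v ∧
      (∀ t : ℝ, (∀ i, 0 ≤ v t i) ∧ v t ≠ 0) ∧
      (∀ s t : ℝ, s ≤ t → v t = v s + ∫ τ in s..t, (A (θ τ ω)).mulVec (v τ)) := by
  intro ω
  have : Nonempty (Fin N) := Fin.pos_iff_nonempty.1 (by omega)
  have hcoeff (i j : Fin N) : LocallyIntegrable fun t => A (θ t ω) i j :=
    locallyIntegrable_coeff_of_eopNorm ((hAmeas i j).comp hθjm.of_uncurry_right) (hAloc ω)
  obtain ⟨v, hcont, hpos, hv⟩ := stmt_15_general hcoeff fun t => hO1 (θ t ω)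
  exact ⟨v, hcont, hpos, fun s t _ => hv s t⟩
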